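/- Let N>1 be an integer. Then c(N) ≥ 1 if one of the following holds: (1) ω(N) ≥ 5, i.e., N has at least five distinct prime factors; or (2) ω(N) ≥ 4 and N is even. -/

import Mathlib

namespace Paper

noncomputable section

/-- Closed disk attached to a rational `α = a/b` in lowest terms:
center `α`, radius `1/b`. -/
def disk (α : ℚ) : Set ℂ := Metric.closedBall (α : ℂ) (1 / (α.den : ℝ))

/-- The closed disk `D_{a/b}` of radius `1/b` centered at `a/b`. -/
def diskAt (a b : ℕ) : Set ℂ := Metric.closedBall ((a : ℂ) / (b : ℂ)) (1 / (b : ℝ))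

/-- The north pole `P_α = a/b + i/b` of the disk of `α = a/b` in lowest terms. -/
def northPole (α : ℚ) : ℂ := (α : ℂ) + Complex.I / (α.den : ℂ)

/-- Complexity of the north pole of `α` relative to a set `S` of rationals:
the number of `β ∈ S`, `β ≠ α`, whose disk contains `P_α`. -/
def poleComplexity (S : Set ℚ) (α : ℚ) : ℕ :=
  {β ∈ S | β ≠ α ∧ northPole α ∈ disk β}.ncard

/-- Rationals `a/b ∈ [0,1]` in lowest terms with `N ∣ b`. -/
def cand (N : ℕ) : Set ℚ := {α | 0 ≤ α ∧ α ≤ 1 ∧ N ∣ α.den}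

/-- The region `R_N`. -/
def RN (N : ℕ) : Set ℂ := ⋃ α ∈ cand N, disk α

/-- The set `S_N`: those `α` whose disk is not covered by the other disks. -/
def SSet (N : ℕ) : Set ℚ :=
  {α | α ∈ cand N ∧ ¬ disk α ⊆ ⋃ β ∈ cand N \ {α}, disk β}

/-- The complexity `c(N)`: the maximum of the complexities of north poles of `α ∈ S_N`. -/
def cN (N : ℕ) : ℕ := sSup (poleComplexity (SSet N) '' SSet N)

/-!
Multiplication by `N` turns `cand N` into the rationals `x ∈ [0, N]` whose numerator is coprime to
`N`, and translation by an integer `n` moves the picture back to the unit interval. If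
`n ≡ -v p` modulo each prime `p ∣ N`, then `p` divides the numerator of `u + n` exactly when it
divides the Farey determinant of `u` and `v p`. With enough primes available, the `v p` can be
chosen so that `0, 1, 1/2, 1/3, 2/3` are excluded while `1/4` and `2/5` survive. The disks of the
survivors are then not covered by the others, and the north pole of `2/5` lies on the boundary of
the disk of `1/4`.

The supremum and the cardinality in `cN` are meaningful only because `S_N` is finite: by Dirichlet,
a rational of large denominator is close to a fraction `r` of small denominator, and its disk lies
in that of a neighbour of `r` whose numerator is coprime to `N`.
-/

theorem num_add_natCast (x : ℚ) (n : ℕ) : (x + n).num = x.num + n * x.den := by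
  have h := Rat.mul_den_eq_num (x + n)
  rw [Rat.add_natCast_den, add_mul, Rat.mul_den_eq_num] at h
  exact_mod_cast h.symm

theorem num_den_div_natCast {N : ℕ} (hN : 0 < N) {x : ℚ} (hx : IsCoprime x.num N) :
    (x / N).num = x.num ∧ (x / N).den = x.den * N := by
  have hpos : (0 : ℤ) < x.den * N := by exact_mod_cast Nat.mul_pos x.den_pos hN
  have hcop : x.num.natAbs.Coprime ((x.den : ℤ) * N).natAbs :=
    Int.isCoprime_iff_gcd_eq_one.mp (x.isCoprime_num_den.mul_right hx)
  have hdiv : x / N = (x.num : ℚ) / ((x.den * N : ℤ) : ℚ) := by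
    push_cast
    rw [← div_div, Rat.num_div_den]
  rw [hdiv]
  exact ⟨Rat.num_div_eq_of_coprime hpos hcop,
    by exact_mod_cast Rat.den_div_eq_of_coprime hpos hcop⟩

theorem isCoprime_num_div {a k m : ℤ} (hk : k ≠ 0) (ha : IsCoprime a m) :
    IsCoprime (a / k : ℚ).num m := by
  rw [← Rat.divInt_eq_div]
  exact ha.of_isCoprime_of_dvd_left (Rat.num_dvd a hk)

theorem dvd_den_div_natCast_iff {N : ℕ} (hN : 0 < N) {x : ℚ} :
    N ∣ (x / N).den ↔ IsCoprime x.num N := by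
  refine ⟨fun ⟨d, hd⟩ => ?_, fun hx => (num_den_div_natCast hN hx).2 ▸ Nat.dvd_mul_left _ _⟩
  have hd0 : (d : ℤ) ≠ 0 := by
    intro h
    rw [Nat.cast_eq_zero.mp h, mul_zero] at hd
    exact (x / N).den_ne_zero hd
  have hx : x = (x / N).num / (d : ℤ) := by
    have hnum := Rat.mul_den_eq_num (x / N)
    rw [hd, Nat.cast_mul, ← mul_assoc, div_mul_cancel₀ x (by exact_mod_cast hN.ne')] at hnum
    exact eq_div_of_mul_eq (by exact_mod_cast hd0) (by exact_mod_cast hnum)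
  have hcop : IsCoprime (x / N).num ((N : ℤ) * d) := by
    rw [← Nat.cast_mul, ← hd]
    exact (x / N).isCoprime_num_den
  rw [hx]
  exact isCoprime_num_div hd0 hcop.of_mul_right_left

theorem div_mem_cand_iff {N : ℕ} (hN : 0 < N) {x : ℚ} :
    x / N ∈ cand N ↔ 0 ≤ x ∧ x ≤ N ∧ IsCoprime x.num N := by
  have hN' : (0 : ℚ) < N := by exact_mod_cast hN
  rw [cand, Set.mem_ofPred_eq, dvd_den_div_natCast_iff hN, div_le_one hN', le_div_iff₀ hN',
    zero_mul]

theorem mem_disk_iff {z : ℂ} {x : ℚ} :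
    z ∈ disk x ↔ (z.re * x.den - x.num) ^ 2 + (z.im * x.den) ^ 2 ≤ 1 := by
  have : (0 : ℝ) < x.den := by exact_mod_cast x.den_pos
  have hx : (x : ℝ) * x.den = x.num := by exact_mod_cast Rat.mul_den_eq_num x
  rw [disk, Metric.mem_closedBall, ← Complex.ofReal_ratCast, Complex.dist_eq_re_im,
    Real.sqrt_le_left (by positivity), Complex.ofReal_re, Complex.ofReal_im, sub_zero, div_pow,
    one_pow, le_div_iff₀ (by positivity), ← hx]
  ring_nf

theorem disk_subset_disk {x y : ℚ} (h : |x - y| + 1 / x.den ≤ 1 / y.den) : disk x ⊆ disk y := by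
  refine Metric.closedBall_subset_closedBall' ?_
  have hR : |(x : ℝ) - y| + 1 / x.den ≤ 1 / y.den := by
    have := (Rat.cast_le (K := ℝ)).mpr h
    push_cast at this
    exact this
  rwa [add_comm, ← Complex.ofReal_ratCast, ← Complex.ofReal_ratCast,
    Complex.dist_of_im_eq ((Complex.ofReal_im _).trans (Complex.ofReal_im _).symm),
    Complex.ofReal_re, Complex.ofReal_re, Real.dist_eq]

theorem add_mem_disk_add_iff {z : ℂ} {x : ℚ} (n : ℕ) : z + n ∈ disk (x + n) ↔ z ∈ disk x := by
  rw [mem_disk_iff, mem_disk_iff, num_add_natCast, Rat.add_natCast_den]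
  simp only [Complex.add_re, Complex.add_im, Complex.natCast_re, Complex.natCast_im]
  push_cast
  ring_nf

theorem div_mem_disk_div_iff {N : ℕ} (hN : 0 < N) {z : ℂ} {x : ℚ} (hx : IsCoprime x.num N) :
    z / N ∈ disk (x / N) ↔ z ∈ disk x := by
  have hN' : (N : ℝ) ≠ 0 := by positivity
  rw [mem_disk_iff, mem_disk_iff, (num_den_div_natCast hN hx).1, (num_den_div_natCast hN hx).2,
    Complex.div_natCast_re, Complex.div_natCast_im]
  push_cast
  rw [div_mul_eq_mul_div, div_mul_eq_mul_div, ← mul_assoc, ← mul_assoc,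
    mul_div_cancel_right₀ _ hN', mul_div_cancel_right₀ _ hN']

theorem northPole_add (x : ℚ) (n : ℕ) : northPole (x + n) = northPole x + n := by
  rw [northPole, northPole, Rat.add_natCast_den]
  push_cast
  ring

theorem northPole_div {N : ℕ} (hN : 0 < N) {x : ℚ} (hx : IsCoprime x.num N) :
    northPole (x / N) = northPole x / N := by
  rw [northPole, northPole, (num_den_div_natCast hN hx).2]
  push_cast
  rw [add_div, div_div]

theorem div_mem_SSet_iff {N : ℕ} (hN : 0 < N) {x : ℚ} (hx : x / N ∈ cand N) :
    x / N ∈ SSet N ↔ ∃ z ∈ disk x, ∀ y : ℚ, y / N ∈ cand N → z ∈ disk y → y = x := by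
  have hN' : (N : ℂ) ≠ 0 := by exact_mod_cast hN.ne'
  have mem_iff {z : ℂ} {y : ℚ} (hy : y / N ∈ cand N) : z / N ∈ disk (y / N) ↔ z ∈ disk y :=
    div_mem_disk_div_iff hN ((div_mem_cand_iff hN).mp hy).2.2
  constructor
  · rintro ⟨-, hcov⟩
    obtain ⟨w, hw, hout⟩ := Set.not_subset.mp hcov
    rw [← mul_div_cancel_right₀ w hN'] at hw hout
    refine ⟨w * N, (mem_iff hx).mp hw, fun y hy hwy => ?_⟩
    by_contra hne
    have hne' : y / N ≠ x / N := fun h => hne ((div_left_inj' (by exact_mod_cast hN.ne')).mp h)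
    exact hout (Set.mem_biUnion ⟨hy, hne'⟩ ((mem_iff hy).mpr hwy))
  · rintro ⟨z, hz, hout⟩
    refine ⟨hx, fun hcov => ?_⟩
    obtain ⟨β, ⟨hβ, hne⟩, hzβ⟩ := Set.mem_iUnion₂.mp (hcov ((mem_iff hx).mpr hz))
    rw [← mul_div_cancel_right₀ β (by exact_mod_cast hN.ne' : (N : ℚ) ≠ 0)] at hβ hne hzβ
    exact hne (congrArg (· / (N : ℚ)) (hout _ hβ ((mem_iff hβ).mp hzβ)))

theorem isCoprime_natCast_iff_forall_prime {N : ℕ} (hN : 0 < N) {a : ℤ} :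
    IsCoprime a N ↔ ∀ p ∈ N.primeFactors, ¬ (p : ℤ) ∣ a := by
  rw [Int.isCoprime_iff_gcd_eq_one, Int.gcd, Int.natAbs_natCast, ← Nat.coprime_iff_gcd_eq_one,
    ← not_iff_not, Nat.Prime.not_coprime_iff_dvd]
  simp only [Nat.mem_primeFactors, Int.natCast_dvd, not_forall, not_not, exists_prop]
  grind

theorem exists_lt_forall_prime_dvd {N : ℕ} (hN : 0 < N) (j k : ℕ → ℤ)
    (hk : ∀ p ∈ N.primeFactors, ¬ (p : ℤ) ∣ k p) :
    ∃ n < N, ∀ p ∈ N.primeFactors, (p : ℤ) ∣ k p * n + j p := by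
  have solve_mod (p : ℕ) : ∃ r : ℕ, p ∈ N.primeFactors → (p : ℤ) ∣ k p * r + j p := by
    by_cases hp : p ∈ N.primeFactors
    · have : Fact p.Prime := ⟨Nat.prime_of_mem_primeFactors hp⟩
      have hk0 : (k p : ZMod p) ≠ 0 :=
        fun h => hk p hp ((ZMod.intCast_zmod_eq_zero_iff_dvd _ _).mp h)
      refine ⟨(-(j p : ZMod p) / k p).val, fun _ => ?_⟩
      rw [← ZMod.intCast_zmod_eq_zero_iff_dvd]
      push_cast
      rw [ZMod.natCast_zmod_val, mul_div_cancel₀ _ hk0, neg_add_cancel]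
    · exact ⟨0, fun h => absurd h hp⟩
  choose r hr using solve_mod
  obtain ⟨n, hn⟩ := Nat.chineseRemainderOfFinset r id N.primeFactors
    (fun p hp => (Nat.prime_of_mem_primeFactors hp).ne_zero)
    (fun p hp q hq hpq => (Nat.coprime_primes (Nat.prime_of_mem_primeFactors hp)
      (Nat.prime_of_mem_primeFactors hq)).mpr hpq)
  refine ⟨n % N, Nat.mod_lt _ hN, fun p hp => ?_⟩
  have hmod : ((n % N : ℕ) : ℤ) ≡ r p [ZMOD p] := Int.natCast_modEq_iff.mpr
    (((Nat.mod_modEq n N).of_dvd (Nat.dvd_of_mem_primeFactors hp)).trans (hn p hp))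
  exact (((hmod.mul_left (k p)).add_right (j p)).dvd_iff).mpr (hr p hp)

theorem exists_lt_isCoprime_add_mul {N : ℕ} (hN : 0 < N) {a b : ℤ} (h : IsCoprime a b) :
    ∃ t < N, IsCoprime (a + t * b) N := by
  obtain ⟨t, ht, hdvd⟩ := exists_lt_forall_prime_dvd hN
    (fun p => if (p : ℤ) ∣ b then 0 else a - 1) (fun p => if (p : ℤ) ∣ b then 1 else b) (by
      intro p hp
      have hp1 : ¬ (p : ℤ) ∣ 1 :=
        (Nat.prime_iff_prime_int.mp (Nat.prime_of_mem_primeFactors hp)).not_dvd_one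
      split_ifs with hpb
      exacts [hp1, hpb])
  refine ⟨t, ht, (isCoprime_natCast_iff_forall_prime hN).mpr fun p hp hpa => ?_⟩
  have hp' := Nat.prime_iff_prime_int.mp (Nat.prime_of_mem_primeFactors hp)
  have hpt := hdvd p hp
  split_ifs at hpt with hpb
  · exact hp'.not_isUnit (h.isUnit_of_dvd' ((dvd_add_left (hpb.mul_left _)).mp hpa) hpb)
  · refine hp'.not_dvd_one ?_
    have hone : a + t * b - (b * t + (a - 1)) = 1 := by ring
    exact hone ▸ dvd_sub hpa hpt

/-- The determinant `ad - bc` of the rationals `a/b` and `c/d`. -/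
def fareyDet (x y : ℚ) : ℤ := x.num * y.den - y.num * x.den

@[simp]
theorem fareyDet_self (x : ℚ) : fareyDet x x = 0 :=
  sub_self _

theorem exists_lt_isCoprime_num_add_iff {N : ℕ} (hN : 0 < N) (v : ℕ → ℚ)
    (hv : ∀ p ∈ N.primeFactors, ¬ p ∣ (v p).den) :
    ∃ n < N, ∀ u : ℚ, IsCoprime (u + n).num N ↔
      ∀ p ∈ N.primeFactors, ¬ (p : ℤ) ∣ fareyDet u (v p) := by
  obtain ⟨n, hn, hdvd⟩ := exists_lt_forall_prime_dvd hN (fun p => (v p).num)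
    (fun p => (v p).den) fun p hp => mt Int.natCast_dvd_natCast.mp (hv p hp)
  refine ⟨n, hn, fun u => ?_⟩
  rw [isCoprime_natCast_iff_forall_prime hN]
  refine forall₂_congr fun p hp => not_congr ?_
  have hp' := Nat.prime_iff_prime_int.mp (Nat.prime_of_mem_primeFactors hp)
  have hden : ¬ (p : ℤ) ∣ (v p).den := mt Int.natCast_dvd_natCast.mp (hv p hp)
  have hdet : (v p).den * (u + n).num = fareyDet u (v p) + u.den * ((v p).den * n + (v p).num) := by
    rw [num_add_natCast, fareyDet]
    ring
  calc (p : ℤ) ∣ (u + n).num ↔ (p : ℤ) ∣ (v p).den * (u + n).num := by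
        rw [hp'.dvd_mul, or_iff_right hden]
    _ ↔ (p : ℤ) ∣ fareyDet u (v p) := by
        rw [hdet, dvd_add_left ((hdvd p hp).mul_left _)]

theorem exists_isCoprime_det_eq_one {N : ℕ} (hN : 0 < N) {r : ℚ} (hr : 1 < r.den) :
    ∃ a k : ℤ, 0 < k ∧ k < r.den * N ∧ IsCoprime a N ∧ a * r.den - r.num * k = 1 := by
  obtain ⟨u, v, huv⟩ := r.isCoprime_num_den
  have : (1 : ℤ) < r.den := by exact_mod_cast hr
  set k₀ := (-u) % (r.den : ℤ)
  set e := (-u) / (r.den : ℤ)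
  have hk₀ : 0 ≤ k₀ := Int.emod_nonneg _ (by positivity)
  have hk₀' : k₀ < r.den := Int.emod_lt_of_pos _ (by positivity)
  have hdet : (v - r.num * e) * r.den - r.num * k₀ = 1 := by
    linear_combination huv - r.num * Int.emod_add_mul_ediv (-u) (r.den : ℤ)
  have hk₀0 : k₀ ≠ 0 := by
    intro h
    rw [h, mul_zero, sub_zero] at hdet
    have := Int.isUnit_iff.mp (IsUnit.of_mul_eq_one_right _ hdet)
    omega
  obtain ⟨t, ht, hcop⟩ := exists_lt_isCoprime_add_mul hN (a := v - r.num * e) (b := r.num)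
    ⟨r.den, -k₀, by linear_combination hdet⟩
  have : (t : ℤ) + 1 ≤ N := by exact_mod_cast ht
  refine ⟨_, k₀ + t * r.den, by positivity, by nlinarith, hcop, by linear_combination hdet⟩

theorem one_div_den_le_abs_sub_intCast {x : ℚ} {m : ℤ} (hx : x ≠ m) :
    1 / (x.den : ℚ) ≤ |x - m| := by
  have hnum : 1 ≤ |(x - m).num| := Int.one_le_abs (Rat.num_ne_zero.mpr (sub_ne_zero.mpr hx))
  calc 1 / (x.den : ℚ) ≤ |((x - m).num : ℚ)| / x.den := by
        gcongr
        exact_mod_cast hnum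
    _ = |x - m| := by
        rw [← Rat.sub_intCast_den x m, ← Nat.abs_cast, ← abs_div, Rat.num_div_den]

theorem mem_Icc_intCast_of_abs_sub_lt {x y : ℚ} {l u : ℤ} (hx : x ∈ Set.Icc (l : ℚ) u)
    (hxy : |x - y| < 1 / y.den) : y ∈ Set.Icc (l : ℚ) u := by
  obtain ⟨hl, hu⟩ := hx
  obtain ⟨h₁, h₂⟩ := abs_lt.mp hxy
  constructor <;> by_contra! hy
  · have := one_div_den_le_abs_sub_intCast hy.ne
    rw [abs_of_neg (sub_neg.mpr hy)] at this
    linarith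
  · have := one_div_den_le_abs_sub_intCast hy.ne'
    rw [abs_of_pos (sub_pos.mpr hy)] at this
    linarith

theorem exists_isCoprime_abs_sub_div_add_le_of_near_int {N : ℕ} (hN : 0 < N) {x : ℚ}
    (hx : N < x.den) {m : ℤ} (hm : |x - m| ≤ 1 / N) :
    ∃ a : ℤ, IsCoprime a N ∧ |x - a / N| + 1 / x.den ≤ 1 / N := by
  have hne : x ≠ m := by
    rintro rfl
    rw [Rat.den_intCast] at hx
    omega
  have hlow := one_div_den_le_abs_sub_intCast hne
  have hN' : (N : ℚ) ≠ 0 := by positivity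
  have shift (s : ℤ) : x - (m * N + s : ℤ) / N = x - m - s / N := by
    push_cast
    field_simp
    ring
  rcases lt_or_gt_of_ne (sub_ne_zero.mpr hne) with hneg | hpos
  · rw [abs_of_neg hneg] at hlow hm
    refine ⟨m * N + (-1 : ℤ), ⟨-1, m, by ring⟩, ?_⟩
    rw [shift, ← le_sub_iff_add_le, abs_le]
    push_cast
    rw [neg_div]
    constructor <;> linarith
  · rw [abs_of_pos hpos] at hlow hm
    refine ⟨m * N + (1 : ℤ), ⟨1, -m, by ring⟩, ?_⟩
    rw [shift, ← le_sub_iff_add_le, abs_le]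
    push_cast
    constructor <;> linarith

theorem exists_isCoprime_abs_sub_div_add_le_of_near_rat {N : ℕ} (hN : 0 < N) {x r : ℚ}
    (hr : 1 < r.den) (hx : 4 * N * r.den ≤ x.den) (hxr : |x - r| ≤ 1 / (4 * N * r.den)) :
    ∃ a k : ℤ, 0 < k ∧ k < r.den * N ∧ IsCoprime a N ∧ |x - a / k| + 1 / x.den ≤ 1 / k := by
  obtain ⟨a, k, hk, hkr, ha, hdet⟩ := exists_isCoprime_det_eq_one hN hr
  refine ⟨a, k, hk, hkr, ha, ?_⟩
  have : (0 : ℚ) < k := by exact_mod_cast hk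
  have hr2 : (2 : ℚ) ≤ r.den := by exact_mod_cast hr
  have hkr' : (4 * k : ℚ) ≤ 4 * N * r.den := by
    have : (k : ℚ) < r.den * N := by exact_mod_cast hkr
    linarith
  have hra : |r - a / k| = 1 / (r.den * k) := by
    have : r - a / k = -(1 / (r.den * k)) := by
      have hdet' : (a : ℚ) * r.den - r.num * k = 1 := by exact_mod_cast hdet
      nth_rewrite 1 [← Rat.num_div_den r]
      field_simp
      linarith
    rw [this, abs_neg, abs_of_pos (by positivity)]
  calc |x - a / k| + 1 / x.den ≤ |x - r| + |r - a / k| + 1 / x.den := by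
        gcongr
        exact abs_sub_le _ _ _
    _ ≤ 1 / (4 * N * r.den) + 1 / (r.den * k) + 1 / (4 * N * r.den) := by
        rw [hra]
        gcongr
        exact_mod_cast hx
    _ ≤ 1 / (4 * k) + 1 / (2 * k) + 1 / (4 * k) := by gcongr
    _ = 1 / k := by field_simp; norm_num

theorem exists_isCoprime_num_abs_sub_add_le {N : ℕ} (hN : 0 < N) {x : ℚ} (hx : 16 * N ^ 2 < x.den) :
    ∃ y : ℚ, IsCoprime y.num N ∧ y ≠ x ∧ |x - y| + 1 / x.den ≤ 1 / y.den := by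
  suffices ∃ a k : ℤ, 0 < k ∧ k < x.den ∧ IsCoprime a N ∧ |x - a / k| + 1 / x.den ≤ 1 / k by
    obtain ⟨a, k, hk, hkx, ha, hle⟩ := this
    have hden : ((a / k : ℚ).den : ℤ) ≤ k :=
      Int.le_of_dvd hk (Rat.divInt_eq_div a k ▸ Rat.den_dvd a k)
    refine ⟨a / k, isCoprime_num_div hk.ne' ha, fun h => ?_, hle.trans ?_⟩
    · rw [h] at hden
      omega
    · exact one_div_le_one_div_of_le (by exact_mod_cast (a / k : ℚ).den_pos)
        (by exact_mod_cast hden)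
  obtain ⟨r, hr, hrN⟩ := Real.exists_rat_abs_sub_le_and_den_le x (n := 4 * N) (by positivity)
  have hxr : |x - r| ≤ 1 / (4 * N * r.den) := by
    have hr' : |x - r| ≤ 1 / ((4 * N + 1) * r.den) := by
      refine (Rat.cast_le (K := ℝ)).mp ?_
      push_cast at hr ⊢
      exact hr
    refine hr'.trans ?_
    gcongr
    linarith
  obtain hr1 | hr1 := eq_or_lt_of_le (Nat.one_le_iff_ne_zero.mpr r.den_ne_zero)
  · have hNx : N < x.den := by nlinarith
    obtain ⟨a, ha, hle⟩ := exists_isCoprime_abs_sub_div_add_le_of_near_int hN hNx (m := r.num) (by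
      rw [Rat.coe_int_num_of_den_eq_one hr1.symm]
      rw [← hr1, Nat.cast_one, mul_one] at hxr
      refine hxr.trans ?_
      gcongr
      linarith [show (0 : ℚ) ≤ N by positivity])
    exact ⟨a, N, by exact_mod_cast hN, by exact_mod_cast hNx, ha, by rwa [Int.cast_natCast]⟩
  · have hrx : 4 * N * r.den ≤ x.den := by nlinarith
    obtain ⟨a, k, hk, hkr, ha, hle⟩ :=
      exists_isCoprime_abs_sub_div_add_le_of_near_rat hN hr1 hrx hxr
    have : (r.den * N : ℤ) ≤ 4 * N * r.den := by nlinarith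
    exact ⟨a, k, hk, by zify at hrx; linarith, ha, hle⟩

theorem finite_setOf_den_le (B : ℕ) : {x : ℚ | 0 ≤ x ∧ x ≤ 1 ∧ x.den ≤ B}.Finite := by
  refine Set.Finite.of_injOn (f := fun x : ℚ => (x.num, x.den))
    (t := Set.Icc (0 : ℤ) B ×ˢ Set.Iic B) ?_ ?_ ((Set.finite_Icc _ _).prod (Set.finite_Iic _))
  · rintro x ⟨h0, h1, hB⟩
    exact ⟨⟨Rat.num_nonneg.mpr h0, (Rat.num_le_denom_iff.mpr h1).trans (by exact_mod_cast hB)⟩, hB⟩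
  · intro x _ y _ h
    exact Rat.ext (congrArg Prod.fst h) (congrArg Prod.snd h)

theorem den_le_of_div_mem_SSet {N : ℕ} (hN : 0 < N) {x : ℚ} (hx : x / N ∈ SSet N) :
    x.den ≤ 16 * N ^ 2 := by
  by_contra! hlt
  obtain ⟨y, hy, hne, hle⟩ := exists_isCoprime_num_abs_sub_add_le hN hlt
  obtain ⟨h0, h1, -⟩ := (div_mem_cand_iff hN).mp hx.1
  obtain ⟨z, hz, hout⟩ := (div_mem_SSet_iff hN hx.1).mp hx
  have hxy : |x - y| < 1 / y.den :=
    (lt_add_of_pos_right _ (by have := x.den_pos; positivity)).trans_le hle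
  have hyIcc : y ∈ Set.Icc ((0 : ℤ) : ℚ) (N : ℤ) :=
    mem_Icc_intCast_of_abs_sub_lt ⟨by exact_mod_cast h0, by exact_mod_cast h1⟩ hxy
  have hyN : y / N ∈ cand N := (div_mem_cand_iff hN).mpr
    ⟨by exact_mod_cast hyIcc.1, by exact_mod_cast hyIcc.2, hy⟩
  exact hne (hout y hyN (disk_subset_disk hle hz))

theorem finite_SSet {N : ℕ} (hN : 0 < N) : (SSet N).Finite := by
  refine (finite_setOf_den_le (16 * N ^ 2 * N)).subset fun α hα => ⟨hα.1.1, hα.1.2.1, ?_⟩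
  rw [← mul_div_cancel_right₀ α (by exact_mod_cast hN.ne' : (N : ℚ) ≠ 0)] at hα ⊢
  rw [(num_den_div_natCast hN ((div_mem_cand_iff hN).mp hα.1).2.2).2]
  exact Nat.mul_le_mul_right N (den_le_of_div_mem_SSet hN hα)

theorem one_le_cN_of_mem {N : ℕ} (hN : 0 < N) {α β : ℚ} (hα : α ∈ SSet N) (hβ : β ∈ SSet N)
    (hne : β ≠ α) (hmem : northPole α ∈ disk β) : 1 ≤ cN N := by
  have hfin := finite_SSet hN
  have hpole : 1 ≤ poleComplexity (SSet N) α :=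
    (Set.ncard_pos (hfin.subset fun _ h => h.1)).mpr ⟨β, hβ, hne, hmem⟩
  exact hpole.trans (le_csSup (hfin.image _).bddAbove ⟨α, hα, rfl⟩)

theorem add_div_mem_SSet {N n : ℕ} (hn : n < N) {w : ℚ} (h0 : 0 ≤ w) (h1 : w ≤ 1)
    (hw : IsCoprime (w + n).num N) {z : ℂ} (hz : z ∈ disk w)
    (hout : ∀ u, z ∈ disk u → u ≠ w → ¬ IsCoprime (u + n).num N) : (w + n) / N ∈ SSet N := by
  have hN : 0 < N := Nat.zero_lt_of_lt hn
  have hnN : (n : ℚ) + 1 ≤ N := by exact_mod_cast hn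
  have hcand : (w + n) / N ∈ cand N :=
    (div_mem_cand_iff hN).mpr ⟨by positivity, by linarith, hw⟩
  refine (div_mem_SSet_iff hN hcand).mpr
    ⟨z + n, (add_mem_disk_add_iff n).mpr hz, fun y hy hzy => ?_⟩
  rw [← sub_add_cancel y (n : ℚ)] at hy hzy ⊢
  by_contra hne
  exact hout _ ((add_mem_disk_add_iff n).mp hzy) (fun h => hne (by rw [h]))
    ((div_mem_cand_iff hN).mp hy).2.2

/-- The fractions other than `1/4` and `2/5` whose disks contain one of the points
`(1 + i)/4 ∈ D_{1/4}` and `9/20 + 7i/40 ∈ D_{2/5}`. -/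
def blockers : Finset ℚ := {0, 1, 1 / 2, 1 / 3, 2 / 3}

theorem eq_one_fourth_or_mem_blockers {u : ℚ} (hu : (⟨1 / 4, 1 / 4⟩ : ℂ) ∈ disk u) :
    u = 1 / 4 ∨ u ∈ blockers := by
  have hsq : (u.den - 4 * u.num) ^ 2 + (u.den : ℤ) ^ 2 ≤ 16 := by
    rw [mem_disk_iff] at hu
    have : ((u.den : ℝ) - 4 * u.num) ^ 2 + (u.den : ℝ) ^ 2 ≤ 16 := by linarith
    exact_mod_cast this
  rw [← Rat.num_div_den u]
  have hpos := u.den_pos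
  generalize u.num = a at *
  generalize u.den = k at *
  have hk : k ≤ 4 := by nlinarith [sq_nonneg ((k : ℤ) - 4 * a)]
  have ha0 : 0 ≤ a := by nlinarith
  have ha1 : a ≤ 1 := by nlinarith
  interval_cases k <;> interval_cases a <;> revert hsq <;> norm_num [blockers]

theorem eq_two_fifths_or_mem_blockers {u : ℚ} (hu : (⟨9 / 20, 7 / 40⟩ : ℂ) ∈ disk u) :
    u = 2 / 5 ∨ u ∈ blockers := by
  have hsq : (18 * u.den - 40 * u.num) ^ 2 + (7 * u.den : ℤ) ^ 2 ≤ 40 ^ 2 := by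
    rw [mem_disk_iff] at hu
    have : (18 * (u.den : ℝ) - 40 * u.num) ^ 2 + (7 * u.den : ℝ) ^ 2 ≤ 40 ^ 2 := by linarith
    exact_mod_cast this
  rw [← Rat.num_div_den u]
  have hpos := u.den_pos
  generalize u.num = a at *
  generalize u.den = k at *
  have hk : k ≤ 5 := by nlinarith [sq_nonneg (18 * (k : ℤ) - 40 * a)]
  have ha0 : 0 ≤ a := by nlinarith
  have ha1 : a ≤ 3 := by nlinarith
  interval_cases k <;> interval_cases a <;> revert hsq <;> norm_num [blockers]

theorem northPole_two_fifths_mem_disk : northPole (2 / 5) ∈ disk (1 / 4) := by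
  have hden : (2 / 5 : ℚ).den = 5 := by norm_num
  rw [northPole, hden, mem_disk_iff]
  norm_num

/-- The congruence `p ∣ (v + n).num` on `n` is solvable, and its solutions keep `p` from dividing
the numerators of `1/4 + n` and `2/5 + n`. -/
def Compatible (p : ℕ) (v : ℚ) : Prop :=
  ¬ (p : ℤ) ∣ v.den * fareyDet (1 / 4) v * fareyDet (2 / 5) v

theorem compatible_zero {p : ℕ} (hp : p.Prime) (h2 : p ≠ 2) : Compatible p 0 := by
  have hdvd : ¬ p ∣ 2 := mt (Nat.prime_dvd_prime_iff_eq hp Nat.prime_two).mp h2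
  have hdet : (0 : ℚ).den * fareyDet (1 / 4) 0 * fareyDet (2 / 5) 0 = 2 := by
    norm_num [fareyDet]
  rw [Compatible, hdet]
  exact_mod_cast hdvd

theorem compatible_one {p : ℕ} (hp : p.Prime) (h3 : p ≠ 3) : Compatible p 1 := by
  have hdvd : ¬ p ∣ 3 ^ 2 := mt (Nat.prime_eq_prime_of_dvd_pow hp Nat.prime_three) h3
  have hdet : (1 : ℚ).den * fareyDet (1 / 4) 1 * fareyDet (2 / 5) 1 = 3 ^ 2 := by
    norm_num [fareyDet]
  rw [Compatible, hdet]
  exact_mod_cast hdvd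

theorem compatible_one_half {p : ℕ} (hp : p.Prime) (h2 : p ≠ 2) : Compatible p (1 / 2) := by
  have hdvd : ¬ p ∣ 2 ^ 2 := mt (Nat.prime_eq_prime_of_dvd_pow hp Nat.prime_two) h2
  have hdet : (1 / 2 : ℚ).den * fareyDet (1 / 4) (1 / 2) * fareyDet (2 / 5) (1 / 2) = 2 ^ 2 := by
    norm_num [fareyDet]
  rw [Compatible, hdet]
  exact_mod_cast hdvd

theorem compatible_one_third {p : ℕ} (hp : p.Prime) (h3 : p ≠ 3) : Compatible p (1 / 3) := by
  have hdvd : ¬ p ∣ 3 := mt (Nat.prime_dvd_prime_iff_eq hp Nat.prime_three).mp h3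
  have hdet : (1 / 3 : ℚ).den * fareyDet (1 / 4) (1 / 3) * fareyDet (2 / 5) (1 / 3) = -3 := by
    norm_num [fareyDet]
  rw [Compatible, hdet, dvd_neg]
  exact_mod_cast hdvd

theorem compatible_two_thirds {p : ℕ} (hp : p.Prime) (h2 : p ≠ 2) (h3 : p ≠ 3) (h5 : p ≠ 5) :
    Compatible p (2 / 3) := by
  have hdvd : ¬ p ∣ 2 ^ 2 * 3 * 5 := by
    rw [hp.dvd_mul, hp.dvd_mul, hp.prime.dvd_pow_iff_dvd two_ne_zero,
      Nat.prime_dvd_prime_iff_eq hp Nat.prime_two, Nat.prime_dvd_prime_iff_eq hp Nat.prime_three,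
      Nat.prime_dvd_prime_iff_eq hp Nat.prime_five]
    tauto
  have hdet : (2 / 3 : ℚ).den * fareyDet (1 / 4) (2 / 3) * fareyDet (2 / 5) (2 / 3) =
      2 ^ 2 * 3 * 5 := by
    norm_num [fareyDet]
  rw [Compatible, hdet]
  exact_mod_cast hdvd

/-- An assignment of a rational `v p` to each prime `p ∈ s` such that, when `n` solves all the
congruences `p ∣ (v p + n).num`, every translate `u + n` of a blocker has a numerator divisible by
some `p ∈ s`, while the numerators of `1/4 + n` and `2/5 + n` are divisible by none. -/
structure IsBlocking (s : Finset ℕ) (v : ℕ → ℚ) : Prop where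
  compatible : ∀ p ∈ s, Compatible p (v p)
  exists_dvd : ∀ u ∈ blockers, ∃ p ∈ s, (p : ℤ) ∣ fareyDet u (v p)

theorem exists_isBlocking_of_two_mem {s : Finset ℕ} (hs : ∀ p ∈ s, p.Prime)
    (h2 : 2 ∈ s) (hcard : 4 ≤ s.card) : ∃ v, IsBlocking s v := by
  obtain ⟨r, hr, hr'⟩ := Finset.exists_mem_notMem_of_card_lt_card
    ((Finset.card_le_three (a := 2) (b := 3) (c := 5)).trans_lt hcard)
  obtain ⟨q, hq, hq'⟩ := Finset.exists_mem_notMem_of_card_lt_card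
    ((Finset.card_le_two (a := 2) (b := r)).trans_lt (by omega : 2 < s.card))
  obtain ⟨p, hp, hp'⟩ := Finset.exists_mem_notMem_of_card_lt_card
    ((Finset.card_le_three (a := 2) (b := r) (c := q)).trans_lt hcard)
  simp only [Finset.mem_insert, Finset.mem_singleton, not_or] at hr' hq' hp'
  let v (l : ℕ) : ℚ := if l = 2 then 1 else if l = r then 2 / 3 else if l = q then 1 / 2 else 0
  have hv2 : v 2 = 1 := if_pos rfl
  have hvr : v r = 2 / 3 := by simp [v, hr']
  have hvq : v q = 1 / 2 := by simp [v, hq']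
  have hvp : v p = 0 := by simp [v, hp']
  refine ⟨v, fun l hl => ?_, ?_⟩
  · simp only [v]
    split_ifs with hl2 hlr hlq
    · exact compatible_one (hs l hl) (by omega)
    · exact compatible_two_thirds (hs l hl) hl2 (by omega) (by omega)
    · exact compatible_one_half (hs l hl) hl2
    · exact compatible_zero (hs l hl) hl2
  · -- The prime `2` blocks `1/3` along with `1`, so four primes suffice.
    have hthird : ((2 : ℕ) : ℤ) ∣ fareyDet (1 / 3) (v 2) := by norm_num [hv2, fareyDet]
    simp only [blockers, Finset.mem_insert, Finset.mem_singleton, forall_eq_or_imp, forall_eq]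
    exact ⟨⟨p, hp, by simp [hvp]⟩, ⟨2, h2, by simp [hv2]⟩, ⟨q, hq, by simp [hvq]⟩,
      ⟨2, h2, hthird⟩, ⟨r, hr, by simp [hvr]⟩⟩

theorem exists_isBlocking_of_two_notMem {s : Finset ℕ} (hs : ∀ p ∈ s, p.Prime)
    (h2 : 2 ∉ s) (hcard : 5 ≤ s.card) : ∃ v, IsBlocking s v := by
  obtain ⟨a, ha, ha'⟩ := Finset.exists_mem_notMem_of_card_lt_card
    ((Finset.card_le_two (a := 3) (b := 5)).trans_lt (by omega : 2 < s.card))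
  obtain ⟨b, hb, hb'⟩ := Finset.exists_mem_notMem_of_card_lt_card
    ((Finset.card_le_two (a := 3) (b := a)).trans_lt (by omega : 2 < s.card))
  obtain ⟨c, hc, hc'⟩ := Finset.exists_mem_notMem_of_card_lt_card
    ((Finset.card_le_three (a := 3) (b := a) (c := b)).trans_lt (by omega : 3 < s.card))
  obtain ⟨d, hd, hd'⟩ := Finset.exists_mem_notMem_of_card_lt_card
    ((Finset.card_le_three (a := a) (b := b) (c := c)).trans_lt (by omega : 3 < s.card))
  obtain ⟨e, he, he'⟩ := Finset.exists_mem_notMem_of_card_lt_card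
    ((Finset.card_le_four (a := a) (b := b) (c := c) (d := d)).trans_lt hcard)
  simp only [Finset.mem_insert, Finset.mem_singleton, not_or] at ha' hb' hc' hd' he'
  let v (l : ℕ) : ℚ :=
    if l = a then 2 / 3 else if l = b then 1 / 3 else if l = c then 1 else
      if l = d then 1 / 2 else 0
  have hva : v a = 2 / 3 := if_pos rfl
  have hvb : v b = 1 / 3 := by simp [v, hb']
  have hvc : v c = 1 := by simp [v, hc']
  have hvd : v d = 1 / 2 := by simp [v, hd']
  have hve : v e = 0 := by simp [v, he']
  refine ⟨v, fun l hl => ?_, ?_⟩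
  · have hl2 : l ≠ 2 := ne_of_mem_of_not_mem hl h2
    simp only [v]
    split_ifs with hla hlb hlc hld
    · exact compatible_two_thirds (hs l hl) hl2 (by omega) (by omega)
    · exact compatible_one_third (hs l hl) (by omega)
    · exact compatible_one (hs l hl) (by omega)
    · exact compatible_one_half (hs l hl) hl2
    · exact compatible_zero (hs l hl) hl2
  · simp only [blockers, Finset.mem_insert, Finset.mem_singleton, forall_eq_or_imp, forall_eq]
    exact ⟨⟨e, he, by simp [hve]⟩, ⟨c, hc, by simp [hvc]⟩, ⟨d, hd, by simp [hvd]⟩,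
      ⟨b, hb, by simp [hvb]⟩, ⟨a, ha, by simp [hva]⟩⟩

theorem exists_isCoprime_num_add_of_card_primeFactors {N : ℕ}
    (h : 5 ≤ N.primeFactors.card ∨ (4 ≤ N.primeFactors.card ∧ Even N)) :
    ∃ n < N, IsCoprime (1 / 4 + n : ℚ).num N ∧ IsCoprime (2 / 5 + n : ℚ).num N ∧
      ∀ u ∈ blockers, ¬ IsCoprime (u + n).num N := by
  have hN : 0 < N := by
    rw [Nat.pos_iff_ne_zero]
    rintro rfl
    simp at h
  obtain ⟨v, hcompat, hblock⟩ : ∃ v, IsBlocking N.primeFactors v := by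
    have hprime : ∀ p ∈ N.primeFactors, p.Prime := fun _ => Nat.prime_of_mem_primeFactors
    by_cases h2 : 2 ∈ N.primeFactors
    · exact exists_isBlocking_of_two_mem hprime h2 (h.elim (by omega) And.left)
    · refine exists_isBlocking_of_two_notMem hprime h2
        (h.resolve_right fun ⟨_, heven⟩ => h2 ?_)
      exact Nat.mem_primeFactors.mpr ⟨Nat.prime_two, heven.two_dvd, hN.ne'⟩
  simp only [Compatible, mul_assoc] at hcompat
  obtain ⟨n, hn, hcop⟩ := exists_lt_isCoprime_num_add_iff hN v fun p hp hdvd =>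
    hcompat p hp ((Int.natCast_dvd_natCast.mpr hdvd).mul_right _)
  refine ⟨n, hn, (hcop _).mpr fun p hp hdvd => ?_, (hcop _).mpr fun p hp hdvd => ?_,
    fun u hu hcop_u => ?_⟩
  · exact hcompat p hp ((hdvd.mul_right _).mul_left _)
  · exact hcompat p hp ((hdvd.mul_left _).mul_left _)
  · obtain ⟨p, hp, hdvd⟩ := hblock u hu
    exact (hcop u).mp hcop_u p hp hdvd

/-- `c(N) ≥ 1` if `N` has at least five distinct prime factors, or if `N` is even
with at least four distinct prime factors. -/
theorem one_le_cN (N : ℕ) (hN : 1 < N)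
    (h : 5 ≤ N.primeFactors.card ∨ (4 ≤ N.primeFactors.card ∧ Even N)) :
    1 ≤ cN N := by
  have hN0 : 0 < N := by omega
  obtain ⟨n, hn, hcop₁, hcop₂, hblock⟩ := exists_isCoprime_num_add_of_card_primeFactors h
  have hβ : (1 / 4 + n : ℚ) / N ∈ SSet N :=
    add_div_mem_SSet hn (by norm_num) (by norm_num) hcop₁
      (z := ⟨1 / 4, 1 / 4⟩) (by norm_num [mem_disk_iff]) fun u hu hne =>
      hblock u ((eq_one_fourth_or_mem_blockers hu).resolve_left hne)
  have hα : (2 / 5 + n : ℚ) / N ∈ SSet N :=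
    add_div_mem_SSet hn (by norm_num) (by norm_num) hcop₂
      (z := ⟨9 / 20, 7 / 40⟩) (by norm_num [mem_disk_iff]) fun u hu hne =>
      hblock u ((eq_two_fifths_or_mem_blockers hu).resolve_left hne)
  refine one_le_cN_of_mem hN0 hα hβ (fun heq => ?_) ?_
  · have := add_right_cancel ((div_left_inj' (by positivity)).mp heq)
    norm_num at this
  · rw [northPole_div hN0 hcop₂, northPole_add, div_mem_disk_div_iff hN0 hcop₁,
      add_mem_disk_add_iff]
    exact northPole_two_fifths_mem_disk

end

end Paper
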